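/- Let K be an algebraically closed field, Δ a simplicial complex on the vertex set X = {x_1,...,x_n}, F a face of Δ with F ≠ X, and Δ' = Δ ∪ co_{x_0}F. If I_Δ is a set-theoretic complete intersection, then ara I_{Δ'} = max(ara I_Δ + 1, n − |F|). -/

import Mathlib

open MvPolynomial

section Core

variable {V : Type*} [DecidableEq V]

/-- `Δ` is a simplicial complex on the vertex set `V`: every singleton is a face
and faces are closed under taking subsets. -/
def IsSimplicialComplex (Δ : Set (Finset V)) : Prop :=
  (∀ v : V, ({v} : Finset V) ∈ Δ) ∧ ∀ F ∈ Δ, ∀ G ⊆ F, G ∈ Δ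

/-- The Stanley-Reisner ideal of `Δ` over `K`: generated by the squarefree monomials
whose support is not a face of `Δ`. -/
noncomputable def srIdeal (K : Type*) [Field K] (Δ : Set (Finset V)) :
    Ideal (MvPolynomial V K) :=
  Ideal.span ((fun S : Finset V => ∏ v ∈ S, (X v : MvPolynomial V K)) '' {S | S ∉ Δ})

/-- The simplicial complex `Δ ∪ co_{x₀} F` on the vertex set `V ∪ {x₀}`,
realized as `Option V` with `none` playing the role of the new vertex `x₀`. -/
def coneUnion (Δ : Set (Finset V)) (F : Finset V) : Set (Finset (Option V)) :=
  ((fun G : Finset V => G.map Function.Embedding.some) '' Δ) ∪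
    {G : Finset (Option V) | G ⊆ insert none (F.map Function.Embedding.some)}

/-- A facet is a maximal face. -/
def IsFacet (Δ : Set (Finset V)) (F : Finset V) : Prop :=
  F ∈ Δ ∧ ∀ G ∈ Δ, F ⊆ G → F = G

/-- The prime ideal `P_F` generated by the variables not in `F`. -/
noncomputable def facePrime (K : Type*) [Field K] (F : Finset V) :
    Ideal (MvPolynomial V K) :=
  Ideal.span ((fun v : V => (X v : MvPolynomial V K)) '' {v : V | v ∉ F})

/-- The dimension of a simplicial complex. -/
noncomputable def scDim (Δ : Set (Finset V)) : ℕ := sSup (Finset.card '' Δ) - 1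

/-- A subfacet of a (pure) complex: a face whose cardinality equals the dimension. -/
noncomputable def IsSubfacet (Δ : Set (Finset V)) (F : Finset V) : Prop :=
  F ∈ Δ ∧ F.card = scDim Δ

end Core

/-- The arithmetical rank of an ideal: the least number of elements generating it
up to radical. -/
noncomputable def ara {R : Type*} [CommRing R] (I : Ideal R) : ℕ :=
  sInf {s : ℕ | ∃ a : Fin s → R, (Ideal.span (Set.range a)).radical = I.radical}

/-- The height of an ideal: the infimum of the heights of the primes containing it. -/
noncomputable def idealHeight {R : Type*} [CommRing R] (I : Ideal R) : ℕ∞ :=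
  ⨅ p : {p : PrimeSpectrum R // I ≤ p.asIdeal}, Order.height p.1

section Helpers

lemma ara_spec {R : Type*} [CommRing R] [IsNoetherianRing R] (I : Ideal R) :
    ∃ a : Fin (ara I) → R, (Ideal.span (Set.range a)).radical = I.radical := by
  have hne : {s : ℕ | ∃ a : Fin s → R,
      (Ideal.span (Set.range a)).radical = I.radical}.Nonempty := by
    obtain ⟨n, a, ha⟩ := Submodule.fg_iff_exists_fin_generating_family.mp
      (IsNoetherian.noetherian I)
    refine ⟨n, a, ?_⟩
    rw [← ha]
  exact Nat.sInf_mem hne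

lemma ara_le_card {R : Type*} [CommRing R] (I : Ideal R) {ι : Type*} [Fintype ι] (f : ι → R)
    (h : (Ideal.span (Set.range f)).radical = I.radical) : ara I ≤ Fintype.card ι := by
  refine Nat.sInf_le ⟨f ∘ (Fintype.equivFin ι).symm, ?_⟩
  rw [← h, (Fintype.equivFin ι).symm.surjective.range_comp]

lemma height_le_ara {R : Type*} [CommRing R] [IsNoetherianRing R] (I P : Ideal R)
    (hP : P ∈ I.minimalPrimes) : P.height ≤ (ara I : ℕ∞) := by
  classical
  obtain ⟨a, ha⟩ := ara_spec I
  have hP' : P ∈ (Ideal.span ((Finset.univ.image a : Finset R) : Set R)).minimalPrimes := by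
    rw [Finset.coe_image, Finset.coe_univ, Set.image_univ, ← Ideal.radical_minimalPrimes, ha,
      Ideal.radical_minimalPrimes]
    exact hP
  refine (Ideal.height_le_card_of_mem_minimalPrimes_span_finset hP').trans ?_
  have := Finset.card_image_le (s := Finset.univ) (f := a)
  rw [Finset.card_univ, Fintype.card_fin] at this
  exact_mod_cast this

variable {V : Type*} [DecidableEq V] (K : Type*) [Field K]

lemma facePrime_eq_ker (F : Finset V) :
    facePrime K F = RingHom.ker
      (aeval (fun v : V => if v ∈ F then (X v : MvPolynomial V K) else 0)).toRingHom := by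
  apply le_antisymm
  · rw [facePrime, Ideal.span_le]
    rintro _ ⟨v, hv, rfl⟩
    have hv' : v ∉ F := hv
    simp [RingHom.mem_ker, hv']
  · have key : ∀ p : MvPolynomial V K,
        p - aeval (fun v : V => if v ∈ F then (X v : MvPolynomial V K) else 0) p
          ∈ facePrime K F := by
      intro p
      induction p using MvPolynomial.induction_on with
      | C a => simp
      | add p q hp hq =>
        rw [map_add, add_sub_add_comm]
        exact Ideal.add_mem _ hp hq
      | mul_X p v hp =>
        rw [map_mul, aeval_X]
        split_ifs with hv
        · rw [← sub_mul]
          exact Ideal.mul_mem_right _ _ hp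
        · rw [mul_zero, sub_zero]
          exact Ideal.mul_mem_left _ _ (Ideal.subset_span ⟨v, hv, rfl⟩)
    intro p hp
    have h0 : aeval (fun v : V => if v ∈ F then (X v : MvPolynomial V K) else 0) p = 0 := hp
    have hk := key p
    rwa [h0, sub_zero] at hk

lemma facePrime_isPrime (F : Finset V) : (facePrime K F).IsPrime := by
  rw [facePrime_eq_ker]
  exact RingHom.ker_isPrime _

lemma X_mem_facePrime (F : Finset V) (v : V) :
    (X v : MvPolynomial V K) ∈ facePrime K F ↔ v ∉ F := by
  rw [facePrime_eq_ker, RingHom.mem_ker]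
  simp

lemma le_height_facePrime [Fintype V] (n : ℕ) : ∀ (F : Finset V), (Finset.univ \ F).card = n →
    (n : ℕ∞) ≤ (facePrime K F).height := by
  induction n with
  | zero => intro F _; simp
  | succ n ih =>
    intro F hF
    obtain ⟨v, hv⟩ : (Finset.univ \ F).Nonempty := by
      rw [← Finset.card_pos]; omega
    have hvF : v ∉ F := by simpa using hv
    have hc : (Finset.univ \ (insert v F)).card = n := by
      rw [Finset.card_univ_sdiff] at hF ⊢
      rw [Finset.card_insert_of_notMem hvF]
      omega
    have h1 := ih _ hc
    have := facePrime_isPrime K F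
    have := facePrime_isPrime K (insert v F)
    have hlt : facePrime K (insert v F) < facePrime K F := by
      refine lt_of_le_of_ne ?_ ?_
      · rw [facePrime, Ideal.span_le]
        rintro _ ⟨w, hw, rfl⟩
        have hw' : w ∉ insert v F := hw
        refine (X_mem_facePrime K F w).2 fun h => hw' (Finset.mem_insert_of_mem h)
      · intro h
        have h2 := (X_mem_facePrime K F v).2 hvF
        rw [← h, X_mem_facePrime] at h2
        exact h2 (Finset.mem_insert_self _ _)
    have h3 := Ideal.height_add_one_le_of_lt_of_isPrime hlt
    push_cast
    exact (add_le_add_left h1 1).trans h3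

lemma height_facePrime_le [Fintype V] (F : Finset V) :
    (facePrime K F).height ≤ ((Finset.univ \ F).card : ℕ∞) := by
  have hp := facePrime_isPrime K F
  classical
  have hs : facePrime K F = Ideal.span
      (((Finset.univ \ F).image (fun v => (X v : MvPolynomial V K)) : Finset _) : Set _) := by
    rw [facePrime]
    congr 1
    ext p
    simp
  have hmin : facePrime K F ∈ (Ideal.span
      (((Finset.univ \ F).image (fun v => (X v : MvPolynomial V K)) : Finset _) :
        Set (MvPolynomial V K))).minimalPrimes := by
    rw [← hs, Ideal.minimalPrimes_eq_subsingleton_self]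
    rfl
  refine (Ideal.height_le_card_of_mem_minimalPrimes_span_finset hmin).trans ?_
  exact_mod_cast Finset.card_image_le

lemma srIdeal_le_facePrime {Δ : Set (Finset V)} (hΔ : ∀ F ∈ Δ, ∀ G ⊆ F, G ∈ Δ)
    {G : Finset V} (hG : G ∈ Δ) : srIdeal K Δ ≤ facePrime K G := by
  rw [srIdeal, Ideal.span_le]
  rintro _ ⟨S, hS, rfl⟩
  have hnot : ¬ S ⊆ G := fun h => hS (hΔ G hG S h)
  obtain ⟨v, hvS, hvG⟩ := Finset.not_subset.mp hnot
  exact Ideal.mem_of_dvd _ (Finset.dvd_prod_of_mem _ hvS) ((X_mem_facePrime K G v).2 hvG)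

lemma facePrime_mem_minimalPrimes {Δ : Set (Finset V)} (hΔ : ∀ F ∈ Δ, ∀ G ⊆ F, G ∈ Δ)
    {G : Finset V} (hG : IsFacet Δ G) : facePrime K G ∈ (srIdeal K Δ).minimalPrimes := by
  refine ⟨⟨facePrime_isPrime K G, srIdeal_le_facePrime K hΔ hG.1⟩, ?_⟩
  rintro Q ⟨hQ, hIQ⟩ hQP
  rw [facePrime, Ideal.span_le]
  rintro _ ⟨v, hv, rfl⟩
  have hv' : v ∉ G := hv
  have hn : insert v G ∉ Δ := by
    intro h
    have := hG.2 _ h (Finset.subset_insert v G)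
    exact hv' (this ▸ Finset.mem_insert_self v G)
  have hmem : (∏ w ∈ insert v G, (X w : MvPolynomial V K)) ∈ Q :=
    hIQ (Ideal.subset_span ⟨_, hn, rfl⟩)
  obtain ⟨w, hw, hwQ⟩ := (hQ.prod_mem_iff).1 hmem
  have hwG := (X_mem_facePrime K G w).1 (hQP hwQ)
  rcases Finset.mem_insert.1 hw with rfl | h
  · exact hwQ
  · exact absurd h hwG

lemma coneUnion_closed {Δ : Set (Finset V)} (hΔ : ∀ F ∈ Δ, ∀ G ⊆ F, G ∈ Δ) (F : Finset V) :
    ∀ A ∈ coneUnion Δ F, ∀ B ⊆ A, B ∈ coneUnion Δ F := by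
  rintro A (⟨G, hG, rfl⟩ | hA) B hB
  · left
    obtain ⟨u, hu, rfl⟩ := Finset.subset_map_iff.1 hB
    exact ⟨u, hΔ G hG u hu, rfl⟩
  · right
    exact hB.trans hA

lemma isFacet_cone {Δ : Set (Finset V)} (F : Finset V) :
    IsFacet (coneUnion Δ F) (insert none (F.map Function.Embedding.some)) := by
  refine ⟨Or.inr (Finset.Subset.refl _), ?_⟩
  rintro A (⟨G, hG, rfl⟩ | hA) h
  · have := h (Finset.mem_insert_self _ _)
    simp at this
  · exact Finset.Subset.antisymm h hA

lemma isFacet_map {Δ : Set (Finset V)} (F : Finset V) {G : Finset V} (hG : IsFacet Δ G)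
    (hGF : ¬ G ⊆ F) : IsFacet (coneUnion Δ F) (G.map Function.Embedding.some) := by
  refine ⟨Or.inl ⟨G, hG.1, rfl⟩, ?_⟩
  rintro A (⟨H, hH, rfl⟩ | hA) h
  · have : G ⊆ H := Finset.map_subset_map.1 h
    rw [hG.2 H hH this]
  · exfalso
    apply hGF
    intro v hv
    have := hA (h (Finset.mem_map_of_mem _ hv))
    simpa using this

lemma exists_facet [Fintype V] {Δ : Set (Finset V)} {F : Finset V} (hF : F ∈ Δ) :
    ∃ G, IsFacet Δ G ∧ F ⊆ G := by
  obtain ⟨G, hFG, hG⟩ := (Set.toFinite Δ).exists_le_maximal hF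
  exact ⟨G, ⟨hG.1, fun H hH h => le_antisymm h (hG.2 hH h)⟩, hFG⟩

lemma srIdeal_coneUnion {Δ : Set (Finset V)} (hΔ : ∀ F ∈ Δ, ∀ G ⊆ F, G ∈ Δ)
    {F : Finset V} (hF : F ∈ Δ) :
    srIdeal K (coneUnion Δ F) = (srIdeal K Δ).map (rename (R := K) (some : V → Option V)) ⊔
      Ideal.span {X none} *
        (facePrime K F).map (rename (R := K) (some : V → Option V)) := by
  apply le_antisymm
  · rw [srIdeal, Ideal.span_le]
    rintro _ ⟨S, hS, rfl⟩
    by_cases h0 : none ∈ S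
    · have hn : ¬ S ⊆ insert none (F.map Function.Embedding.some) := fun h => hS (Or.inr h)
      obtain ⟨w, hwS, hw⟩ := Finset.not_subset.mp hn
      rcases w with _ | v
      · exact absurd (Finset.mem_insert_self _ _) hw
      have hvF : v ∉ F := by
        intro h; apply hw; simp [h]
      apply Ideal.mem_sup_right
      simp only
      rw [← Finset.mul_prod_erase S _ h0]
      refine Ideal.mul_mem_mul (Ideal.mem_span_singleton_self _) ?_
      have hw' : some v ∈ S.erase none := by simp [hwS]
      refine Ideal.mem_of_dvd _ (Finset.dvd_prod_of_mem _ hw') ?_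
      have := Ideal.mem_map_of_mem (rename (R := K) (some : V → Option V))
        ((X_mem_facePrime K F v).2 hvF)
      simpa using this
    · apply Ideal.mem_sup_left
      obtain ⟨T, rfl⟩ : ∃ T : Finset V, S = T.map Function.Embedding.some := by
        refine ⟨Finset.eraseNone S, ?_⟩
        rw [Finset.map_some_eraseNone, Finset.erase_eq_of_notMem h0]
      have hT : T ∉ Δ := fun h => hS (Or.inl ⟨T, h, rfl⟩)
      have := Ideal.mem_map_of_mem (rename (R := K) (some : V → Option V))
        (show (∏ v ∈ T, (X v : MvPolynomial V K)) ∈ srIdeal K Δ from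
          Ideal.subset_span ⟨T, hT, rfl⟩)
      simpa using this
  · refine sup_le ?_ ?_
    · rw [srIdeal, Ideal.map_span, Ideal.span_le]
      rintro _ ⟨_, ⟨T, hT, rfl⟩, rfl⟩
      refine Ideal.subset_span ⟨T.map Function.Embedding.some, ?_, by simp⟩
      rintro (⟨G, hG, h⟩ | h)
      · exact hT ((Finset.map_injective _ h) ▸ hG)
      · apply hT
        refine hΔ F hF T fun v hv => ?_
        simpa using h (Finset.mem_map_of_mem _ hv)
    · rw [facePrime, Ideal.map_span, Ideal.span_mul_span', Ideal.span_le]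
      rintro _ ⟨_, rfl, _, ⟨_, ⟨v, hv, rfl⟩, rfl⟩, rfl⟩
      have hv' : v ∉ F := hv
      refine Ideal.subset_span ⟨{none, some v}, ?_, by simp⟩
      rintro (⟨G, hG, h⟩ | h)
      · have : none ∈ G.map Function.Embedding.some := by
          simp only at h
          rw [h]; simp
        simp at this
      · have := h (show some v ∈ ({none, some v} : Finset (Option V)) by simp)
        simp [hv'] at this

/-- The main construction: if `J` is generated up to radical by `a i` and lies in `(y i)`,
then `J + x₀ (y, z)` is generated up to radical by `a i ^ 2 + x₀ y i` and
`x₀ z j χ - γ`, with `χ` a characteristic polynomial evaluated at `x₀`. -/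
lemma exists_generators {R : Type*} [CommRing R] {m p : Type*} [Fintype m] [DecidableEq m]
    [Nonempty p] (J : Ideal R) (x : R) (a y : m → R) (z : p → R)
    (hJ : J ≤ (Ideal.span (Set.range a)).radical) (ha : ∀ i, a i ∈ J.radical)
    (hay : ∀ i, a i ∈ Ideal.span (Set.range y)) (hJy : J ≤ Ideal.span (Set.range y)) :
    ∃ f : m ⊕ p → R, (Ideal.span (Set.range f)).radical =
      (J ⊔ Ideal.span {x} * (Ideal.span (Set.range y) ⊔ Ideal.span (Set.range z))).radical := by
  have hA : ∀ i, ∃ c : m → R, ∑ j, c j * y j = a i := fun i =>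
    (Ideal.mem_span_range_iff_exists_fun).1 (hay i)
  choose A hA using hA
  let D : Matrix m m R := Matrix.scalar m x + Matrix.of fun i j => a i * A i j
  set χ := D.det with hχ
  set γ := χ - x ^ Fintype.card m with hγ
  have hDy : ∀ i, D.mulVec y i = a i ^ 2 + x * y i := by
    intro i
    simp only [D, Matrix.add_mulVec, Pi.add_apply]
    have h1 : (Matrix.scalar m x).mulVec y i = x * y i := by
      simp [Matrix.scalar_apply, Matrix.mulVec_diagonal]
    have h2 : (Matrix.of fun i j => a i * A i j).mulVec y i = a i ^ 2 := by
      simp only [Matrix.mulVec, dotProduct, Matrix.of_apply]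
      simp_rw [mul_assoc]
      rw [← Finset.mul_sum, hA, sq]
    rw [h1, h2, add_comm]
  have hγJ : γ ∈ J.radical := by
    rw [← Ideal.Quotient.eq_zero_iff_mem, hγ, map_sub, hχ, RingHom.map_det, sub_eq_zero]
    have : (Ideal.Quotient.mk J.radical).mapMatrix D
        = Matrix.scalar m (Ideal.Quotient.mk J.radical x) := by
      ext i j
      have h0 : Ideal.Quotient.mk J.radical (a i) = 0 := Ideal.Quotient.eq_zero_iff_mem.2 (ha i)
      by_cases hij : i = j
      · subst hij; simp [D, h0]
      · simp [D, h0, hij]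
    rw [this]
    simp
  let f : m ⊕ p → R := Sum.elim (fun i => a i ^ 2 + x * y i) (fun j => x * z j * χ - γ)
  refine ⟨f, le_antisymm ?_ ?_⟩
  · rw [Ideal.radical_le_radical_iff, Ideal.span_le]
    have hJle : J.radical ≤
        (J ⊔ Ideal.span {x} * (Ideal.span (Set.range y) ⊔ Ideal.span (Set.range z))).radical :=
      Ideal.radical_mono le_sup_left
    have hxw : ∀ w ∈ Ideal.span (Set.range y) ⊔ Ideal.span (Set.range z), x * w ∈
        (J ⊔ Ideal.span {x} * (Ideal.span (Set.range y) ⊔ Ideal.span (Set.range z))).radical :=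
      fun w hw => Ideal.le_radical (Ideal.mem_sup_right
        (Ideal.mul_mem_mul (Ideal.mem_span_singleton_self x) hw))
    rintro _ ⟨i | j, rfl⟩
    · refine Ideal.add_mem _ (hJle (Ideal.pow_mem_of_mem _ (ha i) 2 (by norm_num))) (hxw _ ?_)
      exact Ideal.mem_sup_left (Ideal.subset_span ⟨i, rfl⟩)
    · refine Ideal.sub_mem _ (Ideal.mul_mem_right _ _ (hxw _ ?_)) (hJle hγJ)
      exact Ideal.mem_sup_right (Ideal.subset_span ⟨j, rfl⟩)
  · rw [Ideal.radical_le_radical_iff, Ideal.radical_eq_sInf (Ideal.span (Set.range f))]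
    refine le_sInf ?_
    rintro Q ⟨hfQ, hQ⟩
    have hf1 : ∀ i, a i ^ 2 + x * y i ∈ Q := fun i => hfQ (Ideal.subset_span ⟨Sum.inl i, rfl⟩)
    have hf2 : ∀ j, x * z j * χ - γ ∈ Q := fun j => hfQ (Ideal.subset_span ⟨Sum.inr j, rfl⟩)
    have hmul : Ideal.span {x} * (Ideal.span (Set.range y) ⊔ Ideal.span (Set.range z)) ≤ Q ↔
        (∀ i, x * y i ∈ Q) ∧ (∀ j, x * z j ∈ Q) := by
      rw [← Ideal.span_union, Ideal.span_mul_span', Ideal.span_le]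
      constructor
      · intro h
        exact ⟨fun i => h ⟨x, rfl, y i, Or.inl ⟨i, rfl⟩, rfl⟩,
          fun j => h ⟨x, rfl, z j, Or.inr ⟨j, rfl⟩, rfl⟩⟩
      · rintro ⟨h1, h2⟩ _ ⟨_, rfl, _, ⟨i, rfl⟩ | ⟨j, rfl⟩, rfl⟩
        · exact h1 i
        · exact h2 j
    by_cases hc : χ ∈ Q
    · obtain ⟨j⟩ := ‹Nonempty p›
      have hg : γ ∈ Q := by
        have := Ideal.sub_mem _ (Ideal.mul_mem_left _ (x * z j) hc) (hf2 j)
        simpa using this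
      have hx : x ∈ Q := by
        apply hQ.mem_of_pow_mem (Fintype.card m)
        have := Ideal.sub_mem _ hc hg
        simpa [hγ] using this
      refine sup_le ?_ (hmul.2 ⟨fun i => Ideal.mul_mem_right _ _ hx,
        fun i => Ideal.mul_mem_right _ _ hx⟩)
      refine hJ.trans ?_
      rw [hQ.radical_le_iff, Ideal.span_le]
      rintro _ ⟨i, rfl⟩
      apply hQ.mem_of_pow_mem 2
      have := Ideal.sub_mem _ (hf1 i) (Ideal.mul_mem_right (y i) _ hx)
      simpa using this
    · have hy : ∀ i, y i ∈ Q := by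
        intro i
        have h1 : D.adjugate.mulVec (D.mulVec y) i = χ * y i := by
          rw [Matrix.mulVec_mulVec, Matrix.adjugate_mul, Matrix.smul_mulVec, Matrix.one_mulVec]
          rfl
        have h2 : χ * y i ∈ Q := by
          rw [← h1, Matrix.mulVec, dotProduct]
          refine Ideal.sum_mem _ fun k _ => Ideal.mul_mem_left _ _ ?_
          rw [hDy]
          exact hf1 k
        exact (hQ.mem_or_mem h2).resolve_left hc
      have hyQ : Ideal.span (Set.range y) ≤ Q := by
        rw [Ideal.span_le]
        rintro _ ⟨i, rfl⟩
        exact hy i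
      have hg : γ ∈ Q := hQ.radical_le_iff.2 (hJy.trans hyQ) hγJ
      refine sup_le (hJy.trans hyQ) (hmul.2 ⟨fun i => Ideal.mul_mem_left _ _ (hy i), fun j => ?_⟩)
      have := Ideal.add_mem _ (hf2 j) hg
      rw [sub_add_cancel] at this
      exact (hQ.mem_or_mem this).resolve_right hc

end Helpers

/-- for `K` algebraically closed, `F` a face of `Δ` with `F ≠ X`, if `I_Δ` is
a set-theoretic complete intersection then `ara I_{Δ'} = max (ara I_Δ + 1) (n − |F|)`. -/
theorem ara_coneUnion_eq {V : Type*} [Fintype V] [DecidableEq V]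
    (K : Type*) [Field K] [IsAlgClosed K]
    (Δ : Set (Finset V)) (hΔ : IsSimplicialComplex Δ)
    (F : Finset V) (hF : F ∈ Δ) (hFX : F ≠ Finset.univ)
    (hstci : (ara (srIdeal K Δ) : ℕ∞) = idealHeight (srIdeal K Δ)) :
    ara (srIdeal K (coneUnion Δ F)) =
      max (ara (srIdeal K Δ) + 1) (Fintype.card V - F.card) := by
  have hcl := hΔ.2
  set h := ara (srIdeal K Δ) with hh
  have hcard : ∀ G : Finset V, (Finset.univ \ G).card = Fintype.card V - G.card := fun G => by
    rw [Finset.card_univ_sdiff]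
  have hle : ∀ G ∈ Δ, h ≤ (Finset.univ \ G).card := by
    intro G hG
    have h1 : idealHeight (srIdeal K Δ) ≤ (facePrime K G).height := by
      have := PrimeSpectrum.height_eq_orderHeight
        (⟨facePrime K G, facePrime_isPrime K G⟩ : PrimeSpectrum (MvPolynomial V K))
      rw [show (facePrime K G).height = _ from this]
      exact iInf_le (fun p : {p : PrimeSpectrum (MvPolynomial V K) //
        srIdeal K Δ ≤ p.asIdeal} => Order.height p.1)
        ⟨⟨facePrime K G, facePrime_isPrime K G⟩, srIdeal_le_facePrime K hcl hG⟩
    rw [← hstci] at h1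
    exact_mod_cast h1.trans (height_facePrime_le K G)
  apply le_antisymm
  · obtain ⟨G, hG, hFG⟩ := exists_facet hF
    have hGh : (Finset.univ \ G).card = h := by
      refine le_antisymm ?_ (hle G hG.1)
      have h1 := (le_height_facePrime K _ G rfl).trans
        (height_le_ara _ _ (facePrime_mem_minimalPrimes K hcl hG))
      exact_mod_cast h1
    obtain ⟨a, ha⟩ := ara_spec (srIdeal K Δ)
    let φ := rename (R := K) (some : V → Option V)
    let e : Fin (ara (srIdeal K Δ)) ≃ ↥(Finset.univ \ G) :=
      (Fintype.equivFinOfCardEq (by rw [Fintype.card_coe]; exact hGh)).symm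
    let y : Fin (ara (srIdeal K Δ)) → MvPolynomial (Option V) K := fun i => X (some (e i : V))
    have hspan : Ideal.span (Set.range y) = (facePrime K G).map φ := by
      rw [facePrime, Ideal.map_span]
      congr 1
      ext q
      constructor
      · rintro ⟨i, rfl⟩
        have hi : (e i : V) ∉ G := (Finset.mem_sdiff.1 (e i).2).2
        exact ⟨X (e i : V), ⟨_, hi, rfl⟩, by simp [φ, y]⟩
      · rintro ⟨_, ⟨v, hv, rfl⟩, rfl⟩
        have hv' : v ∉ G := hv
        exact ⟨e.symm ⟨v, by simp [hv']⟩, by simp [φ, y]⟩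
    have hJP : srIdeal K Δ ≤ facePrime K G := srIdeal_le_facePrime K hcl hG.1
    have haJ : ∀ i, a i ∈ (srIdeal K Δ).radical := fun i => by
      rw [← ha]
      exact Ideal.le_radical (Ideal.subset_span ⟨i, rfl⟩)
    have fin : ∀ (p : Type _) [Fintype p] [Nonempty p] (z : p → MvPolynomial (Option V) K),
        Ideal.span (Set.range y) ⊔ Ideal.span (Set.range z) = (facePrime K F).map φ →
        ara (srIdeal K (coneUnion Δ F)) ≤ h + Fintype.card p := by
      intro p _ _ z hz
      obtain ⟨f, hf⟩ := exists_generators ((srIdeal K Δ).map φ) (X none) (fun i => φ (a i)) y z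
        (by
          have h1 : srIdeal K Δ ≤ (Ideal.span (Set.range a)).radical := by
            rw [ha]; exact Ideal.le_radical
          refine (Ideal.map_mono h1).trans ((Ideal.map_radical_le _).trans ?_)
          rw [Ideal.map_span, ← Set.range_comp]
          rfl)
        (fun i => Ideal.map_radical_le _ (Ideal.mem_map_of_mem _ (haJ i)))
        (fun i => by
          rw [hspan]
          exact Ideal.mem_map_of_mem _ (((facePrime_isPrime K G).radical_le_iff).2 hJP (haJ i)))
        (by rw [hspan]; exact Ideal.map_mono hJP)
      have h2 := ara_le_card (srIdeal K (coneUnion Δ F)) f (by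
        rw [hf, hz, srIdeal_coneUnion K hcl hF])
      simpa [← hh] using h2
    by_cases hFG' : G ⊆ F
    · have hE : F = G := Finset.Subset.antisymm hFG hFG'
      have := fin PUnit (fun _ => 0) (by
        rw [hspan, hE]
        simp)
      exact le_trans (by simpa using this) (le_max_left _ _)
    · obtain ⟨w, hwG, hwF⟩ := Finset.not_subset.1 hFG'
      have : Nonempty ↥(G \ F) := ⟨⟨w, by simp [hwG, hwF]⟩⟩
      have h3 := fin ↥(G \ F) (fun v => X (some (v : V))) (by
        rw [hspan, facePrime, facePrime, Ideal.map_span, Ideal.map_span, ← Ideal.span_union]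
        congr 1
        ext q
        constructor
        · rintro (⟨_, ⟨v, hv, rfl⟩, rfl⟩ | ⟨v, rfl⟩)
          · exact ⟨_, ⟨v, fun hc => hv (hFG hc), rfl⟩, rfl⟩
          · have := v.2
            rw [Finset.mem_sdiff] at this
            exact ⟨_, ⟨v, this.2, rfl⟩, by simp [φ]⟩
        · rintro ⟨_, ⟨v, hv, rfl⟩, rfl⟩
          by_cases hvG : v ∈ G
          · exact Or.inr ⟨⟨v, Finset.mem_sdiff.2 ⟨hvG, hv⟩⟩, by simp [φ]⟩
          · exact Or.inl ⟨_, ⟨v, hvG, rfl⟩, rfl⟩)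
      rw [Fintype.card_coe, Finset.card_sdiff_of_subset hFG] at h3
      rw [hcard] at hGh
      have h4 := Finset.card_le_univ G
      have h5 := Finset.card_le_card hFG
      refine le_trans ?_ (le_max_right _ _)
      omega
  · refine max_le ?_ ?_
    · obtain ⟨v, hv⟩ : ∃ v, v ∉ F := by
        by_contra hcon
        push Not at hcon
        exact hFX (Finset.eq_univ_iff_forall.2 hcon)
      obtain ⟨G, hG, hvG⟩ := exists_facet (hΔ.1 v)
      have hGF : ¬ G ⊆ F := fun hs => hv (hs (hvG (Finset.mem_singleton_self v)))
      have h1 := (le_height_facePrime K _ _ rfl).trans (height_le_ara _ _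
        (facePrime_mem_minimalPrimes K (coneUnion_closed hcl F) (isFacet_map F hG hGF)))
      have h2 : (Finset.univ \ (G.map Function.Embedding.some : Finset (Option V))).card
          ≤ ara (srIdeal K (coneUnion Δ F)) := by exact_mod_cast h1
      have h3 := hle G hG.1
      rw [Finset.card_univ_sdiff, Finset.card_map, Fintype.card_option] at h2
      rw [Finset.card_univ_sdiff] at h3
      have h4 := Finset.card_le_univ G
      omega
    · have h1 := (le_height_facePrime K _ _ rfl).trans (height_le_ara _ _
        (facePrime_mem_minimalPrimes K (coneUnion_closed hcl F) (isFacet_cone F)))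
      have h2 : (Finset.univ \ (insert none (F.map Function.Embedding.some) :
          Finset (Option V))).card ≤ ara (srIdeal K (coneUnion Δ F)) := by exact_mod_cast h1
      rw [Finset.card_univ_sdiff, Finset.card_insert_of_notMem (by simp), Finset.card_map,
        Fintype.card_option] at h2
      omega
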